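/- Let G be a finite group and let C ⊆ G be a union of conjugacy classes of G. Then every eigenvalue of the Cayley digraph Cay(G,C) is an integer if and only if C is power-closed. -/

import Mathlib

/-- A subset `C` of a group is power-closed if for every `x ∈ C` and every `y` in the cyclic
subgroup generated by `x` with `⟨y⟩ = ⟨x⟩`, we have `y ∈ C`. -/
def IsPowerClosed {G : Type*} [Group G] (C : Finset G) : Prop :=
  ∀ x ∈ C, ∀ y : G, y ∈ Subgroup.zpowers x → Subgroup.zpowers y = Subgroup.zpowers x → y ∈ C

/-- The adjacency matrix of the Cayley digraph `Cay(G, C)`: there is an arc `(g, h)` iff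
`g * h⁻¹ ∈ C`. -/
def cayleyAdj {G : Type*} [Group G] [Fintype G] [DecidableEq G] (C : Finset G) :
    Matrix G G ℂ := fun g h => if g * h⁻¹ ∈ C then 1 else 0

open Polynomial


lemma cyclo {n : ℕ} (hn : 0 < n) {ζ : ℂ} (hζ : IsPrimitiveRoot ζ n) {k : ℕ} (hk : k.Coprime n)
    (P : ℤ[X]) (h : aeval ζ P = 0) : aeval (ζ ^ k) P = 0 := by
  have h1 : minpoly ℤ ζ ∣ P := minpoly.isIntegrallyClosed_dvd (hζ.isIntegral hn) h
  rw [hζ.minpoly_eq_pow_coprime hk] at h1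
  exact aeval_eq_zero_of_dvd_aeval_eq_zero h1 (minpoly.aeval _ _)

lemma rat_of_const {n : ℕ} (hn : 0 < n) {ζ : ℂ} (hζ : IsPrimitiveRoot ζ n) (P : ℤ[X]) (c : ℂ)
    (h : ∀ k : ℕ, k.Coprime n → aeval (ζ ^ k) P = c) : ∃ z : ℤ, c = z := by
  set R := P %ₘ cyclotomic n ℤ with hR
  have hprim : ∀ ξ ∈ primitiveRoots n ℂ, aeval ξ R = c := by
    intro ξ hξ
    have hξ' := (mem_primitiveRoots hn).1 hξ
    obtain ⟨k, _, hk, rfl⟩ := haveI : NeZero n := ⟨hn.ne'⟩; hζ.isPrimitiveRoot_iff.1 hξ'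
    rw [← h k hk, hR]
    conv_rhs => rw [← modByMonic_add_div P (cyclotomic n ℤ)]
    have : aeval (ζ ^ k) (cyclotomic n ℤ) = 0 := by
      rw [cyclotomic_eq_minpoly hξ' hn]; exact minpoly.aeval _ _
    simp [this]
  have hdeg : (R.map (Int.castRingHom ℂ) - C c).degree < (primitiveRoots n ℂ).card := by
    rw [Complex.card_primitiveRoots]
    have h1 : R.degree < (cyclotomic n ℤ).degree := degree_modByMonic_lt _ (cyclotomic.monic n ℤ)
    rw [degree_cyclotomic] at h1
    refine lt_of_le_of_lt (degree_sub_le _ _) (max_lt (lt_of_le_of_lt degree_map_le h1) ?_)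
    refine lt_of_le_of_lt degree_C_le ?_
    exact_mod_cast Nat.totient_pos.2 hn
  have h0 : R.map (Int.castRingHom ℂ) - C c = 0 := by
    refine eq_zero_of_degree_lt_of_eval_finset_eq_zero _ hdeg ?_
    intro ξ hξ
    have := hprim ξ hξ
    rw [aeval_def, ← eval_map] at this
    simp only [eval_sub, eval_C, sub_eq_zero]
    exact this
  refine ⟨R.coeff 0, ?_⟩
  have := congrArg (fun p => p.coeff 0) h0
  simp [sub_eq_zero] at this
  exact this.symm

lemma trace_pow_aux {V : Type*} [AddCommGroup V] [Module ℂ V] [FiniteDimensional ℂ V]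
    {n : ℕ} (hn : 0 < n) {ζ : ℂ} (hζ : IsPrimitiveRoot ζ n) (f : Module.End ℂ V) (hf : f ^ n = 1) :
    ∃ P : ℤ[X], ∀ k : ℕ, LinearMap.trace ℂ V (f ^ k) = aeval (ζ ^ k) P := by
  have hn0 : (n : ℂ) ≠ 0 := by exact_mod_cast hn.ne'
  have hζ0 : ζ ≠ 0 := hζ.ne_zero hn.ne'
  let u : ℕ → Module.End ℂ V := fun j => ((ζ ^ j)⁻¹) • f
  let S : ℕ → Module.End ℂ V := fun j => ∑ i ∈ Finset.range n, u j ^ i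
  have hu : ∀ j, u j ^ n = 1 := by
    intro j
    simp only [u, _root_.smul_pow, hf, inv_pow]
    rw [← pow_mul, mul_comm, pow_mul, hζ.pow_eq_one]; simp
  have huS : ∀ j, u j * S j = S j := by
    intro j
    have := mul_geom_sum (u j) n
    rw [hu, sub_self, sub_mul, one_mul, sub_eq_zero] at this
    exact this
  have hupS : ∀ j i, u j ^ i * S j = S j := by
    intro j i
    induction i with
    | zero => simp
    | succ i ih => rw [pow_succ, mul_assoc, huS, ih]
  have hSS : ∀ j, S j * S j = (n : ℂ) • S j := by
    intro j
    conv_lhs => enter [1]; simp only [S]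
    rw [Finset.sum_mul, Finset.sum_congr rfl (fun i _ => hupS j i)]
    simp [← Nat.cast_smul_eq_nsmul ℂ]
  have hfS : ∀ j k, f ^ k * S j = ((ζ ^ k) ^ j) • S j := by
    intro j k
    have h1 : f ^ k = ((ζ ^ k) ^ j) • u j ^ k := by
      simp only [u, _root_.smul_pow, smul_smul, inv_pow]
      rw [← pow_mul, ← pow_mul, mul_comm j k, mul_inv_cancel₀ (pow_ne_zero _ hζ0), one_smul]
    rw [h1, smul_mul_assoc, hupS]
  have hsum : ∑ j ∈ Finset.range n, S j = (n : ℂ) • 1 := by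
    simp only [S, u, _root_.smul_pow]
    rw [Finset.sum_comm]
    simp_rw [← Finset.sum_smul]
    rw [Finset.sum_eq_single 0]
    · simp
    · intro i hi hi0
      have hi' := Finset.mem_range.1 hi
      have : ∑ j ∈ Finset.range n, ((ζ ^ j)⁻¹) ^ i = 0 := by
        have h1 : ∀ j, ((ζ ^ j)⁻¹) ^ i = ((ζ ^ i)⁻¹) ^ j := by
          intro j; rw [inv_pow, inv_pow, ← pow_mul, ← pow_mul, mul_comm]
        simp_rw [h1]
        have h2 := mul_geom_sum ((ζ ^ i)⁻¹) n
        have h3 : ((ζ ^ i)⁻¹) ^ n = 1 := by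
          rw [inv_pow, ← pow_mul, mul_comm, pow_mul, hζ.pow_eq_one]; simp
        rw [h3, sub_self] at h2
        refine (mul_eq_zero.1 h2).resolve_left ?_
        intro h4
        rw [sub_eq_zero] at h4
        exact hζ.pow_ne_one_of_pos_of_lt hi0 hi' (inv_eq_one.1 h4)
      rw [this, zero_smul]
    · intro h; simp at h; omega
  have hd : ∀ j, ∃ d : ℕ, LinearMap.trace ℂ V (S j) = n * d := by
    intro j
    have hE : IsIdempotentElem (((n : ℂ)⁻¹) • S j) := by
      unfold IsIdempotentElem
      rw [smul_mul_smul_comm, hSS, smul_smul]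
      congr 1
      field_simp
    have h1 := ((LinearMap.isProj_range_iff_isIdempotentElem _).2 hE).trace
    refine ⟨Module.finrank ℂ (LinearMap.range (((n : ℂ)⁻¹) • S j)), ?_⟩
    · rw [← h1, map_smul, smul_eq_mul, mul_inv_cancel_left₀ hn0]
  choose d hd using hd
  refine ⟨∑ j ∈ Finset.range n, (d j : ℤ[X]) * X ^ j, fun k => ?_⟩
  have h1 : (n : ℂ) * LinearMap.trace ℂ V (f ^ k) = n * ∑ j ∈ Finset.range n, d j * (ζ ^ k) ^ j := by
    have : (n : ℂ) • f ^ k = ∑ j ∈ Finset.range n, ((ζ ^ k) ^ j) • S j := by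
      simp_rw [← hfS]
      rw [← Finset.mul_sum, hsum, mul_smul_comm, mul_one]
    rw [← smul_eq_mul, ← map_smul, this, map_sum, Finset.mul_sum]
    refine Finset.sum_congr rfl fun j _ => ?_
    rw [map_smul, hd, smul_eq_mul]; ring
  rw [mul_left_cancel₀ hn0 h1]
  simp

/-- Left translation action on functions. -/
def leftTr (G : Type*) [Group G] : G →* Module.End ℂ (G → ℂ) where
  toFun g := LinearMap.funLeft ℂ ℂ (fun h => g⁻¹ * h)
  map_one' := by ext; simp [LinearMap.funLeft]
  map_mul' a b := by
    refine LinearMap.ext fun f => funext fun x => ?_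
    simp [LinearMap.funLeft, mul_assoc]

lemma leftTr_apply {G : Type*} [Group G] (g : G) (f : G → ℂ) (x : G) :
    leftTr G g f x = f (g⁻¹ * x) := rfl

/-- The sum of the translations by `c ^ k`, `c ∈ C`. -/
def powSum {G : Type*} [Group G] (C : Finset G) (k : ℕ) : Module.End ℂ (G → ℂ) :=
  ∑ c ∈ C, leftTr G (c ^ k)

lemma toLin_cayley {G : Type*} [Group G] [Fintype G] [DecidableEq G] (C : Finset G) :
    Matrix.toLin' (cayleyAdj C) = powSum C 1 := by
  refine LinearMap.ext fun f => funext fun x => ?_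
  simp only [Matrix.toLin'_apply, Matrix.mulVec, dotProduct, cayleyAdj, powSum, pow_one,
    LinearMap.sum_apply, Finset.sum_apply, leftTr_apply, ite_mul, one_mul, zero_mul]
  rw [← Finset.sum_filter]
  refine Finset.sum_bij' (fun h _ => x * h⁻¹) (fun c _ => c⁻¹ * x) ?_ ?_ ?_ ?_ ?_ <;> simp

lemma powSum_comm {G : Type*} [Group G] (C : Finset G)
    (hC : ∀ g ∈ C, ∀ h : G, h * g * h⁻¹ ∈ C) (k : ℕ) (g : G) :
    leftTr G g * powSum C k = powSum C k * leftTr G g := by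
  simp only [powSum, Finset.mul_sum, Finset.sum_mul, ← map_mul]
  refine Finset.sum_bij' (fun c _ => g * c * g⁻¹) (fun c _ => g⁻¹ * c * g) ?_ ?_ ?_ ?_ ?_
  · intro c hc; exact hC c hc g
  · intro c hc; simpa using hC c hc g⁻¹
  · intro c _; group
  · intro c _; group
  · intro c _; simp [conj_pow]

lemma inv_trace {G : Type*} [Group G] [Fintype G] (C : Finset G) (W : Submodule ℂ (G → ℂ))
    (hW : ∀ g, ∀ w ∈ W, leftTr G g w ∈ W) {ζ : ℂ} (hζ : IsPrimitiveRoot ζ (Nat.card G)) :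
    ∃ P : ℤ[X], ∀ (k : ℕ) (ν : ℂ), (∀ w ∈ W, powSum C k w = ν • w) →
      aeval (ζ ^ k) P = ν * Module.finrank ℂ W := by
  have h1 : ∀ c : G, ∃ P : ℤ[X], ∀ k : ℕ,
      LinearMap.trace ℂ W ((leftTr G c).restrict (hW c) ^ k) = aeval (ζ ^ k) P := by
    intro c
    refine trace_pow_aux Nat.card_pos hζ _ ?_
    refine LinearMap.ext fun w => Subtype.ext ?_
    rw [Module.End.pow_restrict, LinearMap.coe_restrict_apply, ← map_pow, pow_card_eq_one']
    simp
  choose P hP using h1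
  refine ⟨∑ c ∈ C, P c, fun k ν h => ?_⟩
  rw [map_sum, ← Finset.sum_congr rfl (fun c _ => hP c k), ← map_sum]
  have : ∑ c ∈ C, (leftTr G c).restrict (hW c) ^ k = ν • LinearMap.id := by
    refine LinearMap.ext fun w => Subtype.ext ?_
    have h2 := h w w.2
    simp only [LinearMap.smul_apply, LinearMap.id_apply, Submodule.coe_smul, ← h2, powSum,
      LinearMap.sum_apply, Submodule.coe_sum]
    refine Finset.sum_congr rfl fun c _ => ?_
    rw [Module.End.pow_restrict, LinearMap.coe_restrict_apply, ← map_pow]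
  rw [this, map_smul, LinearMap.trace_id, smul_eq_mul]

lemma isIntegral_eig {G : Type*} [Group G] [Fintype G] [DecidableEq G] (C : Finset G) (μ : ℂ)
    (hμ : (powSum C 1).HasEigenvalue μ) : IsIntegral ℤ μ := by
  rw [← toLin_cayley, Module.End.hasEigenvalue_iff_isRoot_charpoly, Matrix.charpoly_toLin'] at hμ
  have h : cayleyAdj C = (Matrix.of fun g h => if g * h⁻¹ ∈ C then (1 : ℤ) else 0).map
      (Int.castRingHom ℂ) := by
    ext a b; simp [cayleyAdj]
  rw [h, Matrix.charpoly_map, IsRoot.def, eval_map] at hμ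
  exact ⟨_, Matrix.charpoly_monic _, hμ⟩

lemma eig_int {G : Type*} [Group G] [Fintype G] [DecidableEq G] (C : Finset G)
    (hC : ∀ g ∈ C, ∀ h : G, h * g * h⁻¹ ∈ C) (hp : IsPowerClosed C) (μ : ℂ)
    (hμ : (powSum C 1).HasEigenvalue μ) : ∃ k : ℤ, μ = k := by
  have hζ := Complex.isPrimitiveRoot_exp (Nat.card G) Nat.card_pos.ne'
  set ζ := Complex.exp (2 * Real.pi * Complex.I / (Nat.card G : ℂ))
  have hinv : ∀ k : ℕ, k.Coprime (Nat.card G) → powSum C k = powSum C 1 := by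
    intro k hk
    have hbij := Nat.Coprime.pow_left_bijective (G := G) hk.symm
    have hmap : ∀ c ∈ C, c ^ k ∈ C := by
      intro c hc
      refine hp c hc _ (Subgroup.npow_mem_zpowers c k) ?_
      have hco : (orderOf c).Coprime k := (hk.coprime_dvd_right (orderOf_dvd_natCard c)).symm
      refine le_antisymm (by simp [Subgroup.zpowers_le]) ?_
      rw [Subgroup.zpowers_le]
      obtain ⟨m, hm⟩ := exists_pow_eq_self_of_coprime hco.symm
      exact ⟨m, by simpa using hm⟩
    have himg : C.image (fun c => c ^ k) = C := by
      refine Finset.eq_of_subset_of_card_le ?_ ?_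
      · intro y hy
        obtain ⟨c, hc, rfl⟩ := Finset.mem_image.1 hy
        exact hmap c hc
      · rw [Finset.card_image_of_injective _ hbij.1]
    unfold powSum
    conv_rhs => rw [← himg]
    rw [Finset.sum_image (fun a _ b _ h => hbij.1 h)]
    simp
  set W := (powSum C 1).eigenspace μ with hWdef
  have hW : ∀ g, ∀ w ∈ W, leftTr G g w ∈ W := by
    intro g w hw
    rw [hWdef, Module.End.mem_eigenspace_iff] at hw ⊢
    have := LinearMap.congr_fun (powSum_comm C hC 1 g) w
    simp only [Module.End.mul_apply] at this
    rw [← this, hw, map_smul]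
  obtain ⟨P, hP⟩ := inv_trace C W hW hζ
  obtain ⟨z, hz⟩ := rat_of_const Nat.card_pos hζ P (μ * Module.finrank ℂ W) (by
    intro k hk
    refine hP k μ fun w hw => ?_
    rw [hinv k hk]
    exact Module.End.mem_eigenspace_iff.1 hw)
  have hd : (Module.finrank ℂ W : ℂ) ≠ 0 := by
    have : Nontrivial W := (Submodule.nontrivial_iff_ne_bot).2 hμ
    exact_mod_cast (Module.finrank_pos (R := ℂ) (M := W)).ne'
  have hq : μ = algebraMap ℚ ℂ ((z : ℚ) / Module.finrank ℂ W) := by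
    simp
    field_simp
    exact hz
  have hintg := isIntegral_eig C μ hμ
  rw [hq, isIntegral_algebraMap_iff (algebraMap ℚ ℂ).injective,
    IsIntegrallyClosed.isIntegral_iff] at hintg
  obtain ⟨y, hy⟩ := hintg
  refine ⟨y, ?_⟩
  rw [hq, ← hy]; simp

lemma diff_eig {G : Type*} [Group G] [Fintype G] (C : Finset G)
    (hC : ∀ g ∈ C, ∀ h : G, h * g * h⁻¹ ∈ C)
    (hintg : ∀ μ, (powSum C 1).HasEigenvalue μ → ∃ k : ℤ, μ = k)
    (k : ℕ) (hk : k.Coprime (Nat.card G)) (lam : ℂ)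
    (hl : (powSum C 1 - powSum C k).HasEigenvalue lam) : lam = 0 := by
  have hζ := Complex.isPrimitiveRoot_exp (Nat.card G) Nat.card_pos.ne'
  set ζ := Complex.exp (2 * Real.pi * Complex.I / (Nat.card G : ℂ))
  have hcomm : ∀ i j, powSum C i * powSum C j = powSum C j * powSum C i := by
    intro i j
    conv_lhs => rw [powSum]
    conv_rhs => enter [2]; rw [powSum]
    rw [Finset.sum_mul, Finset.mul_sum]
    exact Finset.sum_congr rfl fun c _ => powSum_comm C hC j _
  set D := powSum C 1 - powSum C k with hD
  have hDA : powSum C 1 * D = D * powSum C 1 := by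
    rw [hD, mul_sub, sub_mul, hcomm 1 k]
  set E := D.eigenspace lam with hE
  have hEinv : ∀ w ∈ E, powSum C 1 w ∈ E := by
    intro w hw
    rw [hE, Module.End.mem_eigenspace_iff] at hw ⊢
    have := LinearMap.congr_fun hDA w
    simp only [Module.End.mul_apply] at this
    rw [← this, hw, map_smul]
  have : Nontrivial E := (Submodule.nontrivial_iff_ne_bot).2 hl
  obtain ⟨μ, hμ⟩ := Module.End.exists_eigenvalue ((powSum C 1).restrict hEinv)
  obtain ⟨v, hv⟩ := hμ.exists_hasEigenvector
  have hv1 : powSum C 1 (v : G → ℂ) = μ • (v : G → ℂ) := by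
    have := congrArg Subtype.val hv.apply_eq_smul
    simpa using this
  have hv0 : (v : G → ℂ) ≠ 0 := by
    intro h; exact hv.2 (Subtype.ext h)
  set W := E ⊓ (powSum C 1).eigenspace μ with hWd
  have hvW : (v : G → ℂ) ∈ W := ⟨v.2, Module.End.mem_eigenspace_iff.2 hv1⟩
  obtain ⟨m, hm⟩ := hintg μ (Module.End.hasEigenvalue_of_hasEigenvector
    ⟨Module.End.mem_eigenspace_iff.2 hv1, hv0⟩)
  have hW : ∀ g, ∀ w ∈ W, leftTr G g w ∈ W := by
    rintro g w ⟨hw1, hw2⟩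
    have c1 := LinearMap.congr_fun (powSum_comm C hC 1 g) w
    have c2 := LinearMap.congr_fun (powSum_comm C hC k g) w
    simp only [Module.End.mul_apply] at c1 c2
    have hw1 := Module.End.mem_eigenspace_iff.1 hw1
    have hw2 := Module.End.mem_eigenspace_iff.1 hw2
    refine ⟨Module.End.mem_eigenspace_iff.2 ?_, Module.End.mem_eigenspace_iff.2 ?_⟩
    · rw [← map_smul, ← hw1, hD, LinearMap.sub_apply, LinearMap.sub_apply, map_sub, c1, c2]
    · rw [← c1, hw2, map_smul]
  obtain ⟨P, hP⟩ := inv_trace C W hW hζ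
  have e1 := hP 1 μ fun w hw => Module.End.mem_eigenspace_iff.1 hw.2
  have e2 := hP k (μ - lam) fun w hw => by
    have h1 := Module.End.mem_eigenspace_iff.1 hw.1
    have h2 := Module.End.mem_eigenspace_iff.1 hw.2
    rw [hD, LinearMap.sub_apply, h2] at h1
    rw [sub_smul, ← h1]; abel
  have e3 := cyclo Nat.card_pos hζ hk (P - ((m * Module.finrank ℂ W : ℤ) : ℤ[X])) (by
    rw [pow_one] at e1
    simp [e1, hm])
  have hd : (Module.finrank ℂ W : ℂ) ≠ 0 := by
    have : Nontrivial W := ⟨⟨v, hvW⟩, 0, fun h => hv0 (congrArg Subtype.val h)⟩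
    exact_mod_cast (Module.finrank_pos (R := ℂ) (M := W)).ne'
  rw [map_sub, e2, hm] at e3
  simp only [map_intCast, map_mul, map_natCast, Int.cast_mul, Int.cast_natCast] at e3
  have : lam * Module.finrank ℂ W = 0 := by linear_combination -e3
  exact (mul_eq_zero.1 this).resolve_right hd

lemma nilp_of_eig {V : Type*} [AddCommGroup V] [Module ℂ V] [FiniteDimensional ℂ V]
    (D : Module.End ℂ V) (h : ∀ lam, D.HasEigenvalue lam → lam = 0) : IsNilpotent D := by
  rw [LinearMap.isNilpotent_iff_charpoly]
  have hs := IsAlgClosed.splits D.charpoly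
  have hm := LinearMap.charpoly_monic D
  have hr : D.charpoly.roots = Multiset.replicate (Module.finrank ℂ V) 0 := by
    rw [Multiset.eq_replicate]
    refine ⟨?_, ?_⟩
    · rw [← hs.natDegree_eq_card_roots, LinearMap.charpoly_natDegree]
    · intro b hb
      exact h b ((Module.End.hasEigenvalue_iff_isRoot_charpoly _ _).2 (isRoot_of_mem_roots hb))
  rw [hs.eq_prod_roots_of_monic hm, hr]
  simp

lemma leftTr_conjT {G : Type*} [Group G] [Fintype G] [DecidableEq G] (g : G) :
    (LinearMap.toMatrix' (leftTr G g)).conjTranspose = LinearMap.toMatrix' (leftTr G g⁻¹) := by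
  ext a b
  simp only [Matrix.conjTranspose_apply, LinearMap.toMatrix'_apply, leftTr_apply, inv_inv,
    Pi.single_apply]
  by_cases h : g * a = b
  · simp [← h]
  · have : ¬ g⁻¹ * b = a := by rintro rfl; simp at h
    simp [h, this]

lemma powSum_eq {G : Type*} [Group G] [Fintype G] [DecidableEq G] (C : Finset G)
    (hC : ∀ g ∈ C, ∀ h : G, h * g * h⁻¹ ∈ C)
    (hintg : ∀ μ, (powSum C 1).HasEigenvalue μ → ∃ k : ℤ, μ = k)
    (k : ℕ) (hk : k.Coprime (Nat.card G)) : powSum C 1 = powSum C k := by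
  have hn := nilp_of_eig _ (diff_eig C hC hintg k hk)
  set D := powSum C 1 - powSum C k with hD
  have hDg : ∀ g, leftTr G g * D = D * leftTr G g := by
    intro g
    rw [hD, mul_sub, sub_mul, powSum_comm C hC, powSum_comm C hC]
  set M := LinearMap.toMatrix' D with hM
  have hMn : IsNilpotent M := hn.map (LinearMap.toMatrixAlgEquiv' (R := ℂ) (n := G))
  have hMg : ∀ g, Commute (LinearMap.toMatrix' (leftTr G g)) M := by
    intro g
    have := congrArg LinearMap.toMatrix' (hDg g)
    rw [LinearMap.toMatrix'_mul, LinearMap.toMatrix'_mul] at this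
    exact this
  have hMM : Commute M.conjTranspose M := by
    have : M.conjTranspose = ∑ c ∈ C, LinearMap.toMatrix' (leftTr G (c ^ 1)⁻¹)
        - ∑ c ∈ C, LinearMap.toMatrix' (leftTr G (c ^ k)⁻¹) := by
      rw [hM, hD, map_sub, powSum, powSum, map_sum, map_sum, Matrix.conjTranspose_sub,
        Matrix.conjTranspose_sum, Matrix.conjTranspose_sum]
      simp_rw [leftTr_conjT]
    rw [this]
    exact (Commute.sum_left _ _ _ fun c _ => hMg _).sub_left
      (Commute.sum_left _ _ _ fun c _ => hMg _)
  have hN : IsNilpotent (M.conjTranspose * M) := hMM.isNilpotent_mul_left hMn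
  have ht := (Matrix.isNilpotent_trace_of_isNilpotent hN).eq_zero
  open ComplexOrder in
  have hM0 : M = 0 := Matrix.trace_conjTranspose_mul_self_eq_zero_iff.1 ht
  have : D = 0 := LinearMap.toMatrix'.injective (by rw [← hM, hM0, map_zero])
  exact sub_eq_zero.1 this

lemma powClosed_of {G : Type*} [Group G] [Fintype G] [DecidableEq G] (C : Finset G)
    (h : ∀ k : ℕ, k.Coprime (Nat.card G) → powSum C 1 = powSum C k) : IsPowerClosed C := by
  have key : ∀ x ∈ C, ∀ k : ℕ, k.Coprime (Nat.card G) → x ^ k ∈ C := by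
    intro x hx k hk
    by_contra hxk
    have h1 := congrFun (LinearMap.congr_fun (h k hk) (Pi.single 1 1)) (x ^ k)
    simp only [powSum, LinearMap.sum_apply, Finset.sum_apply, leftTr_apply, Pi.single_apply,
      pow_one, inv_mul_eq_one] at h1
    rw [Finset.sum_eq_zero, Finset.sum_boole] at h1
    · have h2 := Finset.card_eq_zero.1 (Nat.cast_eq_zero.1 h1.symm)
      have h3 : x ∈ C.filter (fun c => c ^ k = x ^ k) := by simp [hx]
      rw [h2] at h3
      simp at h3
    · intro c hc
      rw [if_neg]
      rintro rfl
      exact hxk hc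
  intro x hx y hy hxy
  obtain ⟨j, rfl⟩ := mem_powers_iff_mem_zpowers.2 hy
  have ho : orderOf (x ^ j) = orderOf x := by
    rw [← Nat.card_zpowers, ← Nat.card_zpowers, hxy]
  have hpos : 0 < orderOf x := orderOf_pos x
  have hco : j.Coprime (orderOf x) := by
    rw [orderOf_pow] at ho
    have hdvd : (orderOf x).gcd j ∣ orderOf x := Nat.gcd_dvd_left _ _
    have h2 := Nat.div_mul_cancel hdvd
    rw [ho] at h2
    rw [Nat.coprime_comm]
    exact Nat.eq_of_mul_eq_mul_left hpos (by rw [h2, mul_one])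
  have : NeZero (Nat.card G) := ⟨Nat.card_pos.ne'⟩
  obtain ⟨v, hv⟩ := ZMod.unitsMap_surjective (orderOf_dvd_natCard x) (ZMod.unitOfCoprime j hco)
  have hx2 := key x hx (v : ZMod (Nat.card G)).val (ZMod.val_coe_unit_coprime v)
  have hmod : x ^ (v : ZMod (Nat.card G)).val = x ^ j := by
    rw [pow_eq_pow_iff_modEq, ← ZMod.natCast_eq_natCast_iff]
    have := congrArg Units.val hv
    rw [ZMod.unitsMap_val, ZMod.coe_unitOfCoprime] at this
    rw [← this, ZMod.natCast_val]
  show x ^ j ∈ C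
  rw [← hmod]
  exact hx2

/-- Theorem 1: for `C` a union of conjugacy classes, all eigenvalues of `Cay(G, C)` are
integers iff `C` is power-closed. -/
theorem stmt0 {G : Type*} [Group G] [Fintype G] [DecidableEq G] (C : Finset G)
    (hC : ∀ g ∈ C, ∀ h : G, h * g * h⁻¹ ∈ C) :
    (∀ μ ∈ spectrum ℂ (cayleyAdj C), ∃ k : ℤ, μ = (k : ℂ)) ↔ IsPowerClosed C := by
  rw [← Matrix.spectrum_toLin', toLin_cayley]
  simp_rw [← Module.End.hasEigenvalue_iff_mem_spectrum]
  exact ⟨fun h => powClosed_of C (powSum_eq C hC h), fun h μ hμ => eig_int C hC h μ hμ⟩
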